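/- Let ρ, F be C¹ on a ball B_r ⊂ ℝ³ (ρ scalar, F matrix-valued), with div(ρFᵀ) = 0, and suppose ρ(F − I) and ρ(F−I)(F−I)ᵀ vanish near ∂B_r. Then ∫_{B_r} x · div(ρ F Fᵀ) dx = −∫_{B_r} ρ|F−I|² dx − ∫_{B_r} ρ tr(F−I) dx. -/

import Mathlib

open MeasureTheory Metric

/-- Integration by parts of a compactly supported `C¹` function against a coordinate. -/
theorem integral_coord_mul_fderiv_single {ι : Type*} [Fintype ι] [DecidableEq ι]
    {f : EuclideanSpace ℝ ι → ℝ} (hf : ContDiff ℝ 1 f) (hc : HasCompactSupport f) (i j : ι) :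
    Integrable (fun x : EuclideanSpace ℝ ι =>
      x i * fderiv ℝ f x (EuclideanSpace.single j 1)) ∧
    ∫ x : EuclideanSpace ℝ ι, x i * fderiv ℝ f x (EuclideanSpace.single j 1) =
      -∫ x, (if i = j then f x else 0) := by
  have hcoord : ContDiff ℝ 1 (fun x : EuclideanSpace ℝ ι => x i) := by fun_prop
  have hfderiv (x : EuclideanSpace ℝ ι) :
      fderiv ℝ (fun x : EuclideanSpace ℝ ι => x i) x (EuclideanSpace.single j 1) =
        if i = j then 1 else 0 := by
    have h : HasFDerivAt (fun x : EuclideanSpace ℝ ι => x i)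
        (EuclideanSpace.proj i : EuclideanSpace ℝ ι →L[ℝ] ℝ) x :=
      (EuclideanSpace.proj i : EuclideanSpace ℝ ι →L[ℝ] ℝ).hasFDerivAt
    rw [h.fderiv]
    simp
  have hcont : Continuous fun x => fderiv ℝ f x (EuclideanSpace.single j 1) :=
    (hf.continuous_fderiv one_ne_zero).clm_apply continuous_const
  have hint : Integrable (fun x : EuclideanSpace ℝ ι =>
      x i * fderiv ℝ f x (EuclideanSpace.single j 1)) :=
    (hcoord.continuous.mul hcont).integrable_of_hasCompactSupport
      (hc.fderiv_apply (𝕜 := ℝ) _).mul_left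
  refine ⟨hint, ?_⟩
  rw [integral_mul_fderiv_eq_neg_fderiv_mul_of_integrable _ hint
    ((hcoord.continuous.mul hf.continuous).integrable_of_hasCompactSupport hc.mul_left)
    (fun x _ => hcoord.differentiable one_ne_zero x)
    (fun x _ => hf.differentiable one_ne_zero x)]
  · simp only [hfderiv, ite_mul, one_mul, zero_mul]
  · simp only [hfderiv, ite_mul, one_mul, zero_mul]
    split_ifs
    · exact hf.continuous.integrable_of_hasCompactSupport hc
    · exact integrable_zero _ _ _

/-- The integral of `x · div A` over a ball equals minus the integral of the trace of `A`, for a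
`C¹` matrix field `A` vanishing near the boundary of the ball and outside it. -/
theorem setIntegral_closedBall_coord_mul_div {ι : Type*} [Fintype ι] [DecidableEq ι]
    {A : ι → ι → EuclideanSpace ℝ ι → ℝ} (hA : ∀ i j, ContDiff ℝ 1 (A i j))
    {r r' : ℝ} (hr : r' < r) (hsupp : ∀ x, r' ≤ ‖x‖ → ∀ i j, A i j x = 0) :
    ∫ x in closedBall (0 : EuclideanSpace ℝ ι) r,
        ∑ i, x i * ∑ j, fderiv ℝ (A i j) x (EuclideanSpace.single j 1) =
      -∫ x in closedBall (0 : EuclideanSpace ℝ ι) r, ∑ i, A i i x := by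
  have hc (i j : ι) : HasCompactSupport (A i j) :=
    HasCompactSupport.intro (isCompact_closedBall 0 r) fun x hx =>
      hsupp x (by rw [mem_closedBall_zero_iff, not_le] at hx; linarith) i j
  have hfderiv (x : EuclideanSpace ℝ ι) (hx : x ∉ closedBall 0 r) (i j : ι) :
      fderiv ℝ (A i j) x = 0 := by
    rw [mem_closedBall_zero_iff, not_le] at hx
    have h : A i j =ᶠ[nhds x] fun _ => 0 := by
      filter_upwards [continuous_norm.continuousAt.eventually (lt_mem_nhds (hr.trans hx))] with y hy
      exact hsupp y hy.le i j
    rw [h.fderiv_eq]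
    simp
  rw [setIntegral_eq_integral_of_forall_compl_eq_zero fun x hx => by simp [hfderiv x hx],
    setIntegral_eq_integral_of_forall_compl_eq_zero fun x hx => Finset.sum_eq_zero fun i _ =>
      hsupp x (by rw [mem_closedBall_zero_iff, not_le] at hx; linarith) i i]
  simp only [Finset.mul_sum]
  have key (i j : ι) := integral_coord_mul_fderiv_single (hA i j) (hc i j) i j
  rw [integral_finsetSum _ fun i _ => integrable_finsetSum _ fun j _ => (key i j).1,
    integral_finsetSum _ fun i _ =>
      (hA i i).continuous.integrable_of_hasCompactSupport (hc i i),
    ← Finset.sum_neg_distrib]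
  refine Finset.sum_congr rfl fun i _ => ?_
  rw [integral_finsetSum _ fun j _ => (key i j).1, Finset.sum_congr rfl fun j _ => (key i j).2,
    Finset.sum_eq_single i (fun j _ hj => by simp [hj.symm]) (by simp)]
  simp

/-- Key integration-by-parts identity on the ball `B_r`:
`∫_{B_r} x · div(ρFFᵀ) dx = −∫_{B_r} ρ|F−I|² dx − ∫_{B_r} ρ tr(F−I) dx`,
assuming `div(ρFᵀ) = 0` and that `ρ(F−I)` vanishes near `∂B_r`. -/
theorem ball_divergence_identity (r : ℝ) (hr : 0 < r)
    (ρ : EuclideanSpace ℝ (Fin 3) → ℝ)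
    (F : EuclideanSpace ℝ (Fin 3) → (Fin 3 → Fin 3 → ℝ))
    (hρ : ContDiff ℝ 1 ρ) (hF : ContDiff ℝ 1 F)
    (hdiv : ∀ x ∈ closedBall (0 : EuclideanSpace ℝ (Fin 3)) r, ∀ k,
      ∑ j, fderiv ℝ (fun y => ρ y * F y k j) x (EuclideanSpace.single j 1) = 0)
    (hsupp : ∃ r' < r, ∀ x : EuclideanSpace ℝ (Fin 3), r' ≤ ‖x‖ →
      ∀ i j, ρ x * (F x i j - if i = j then 1 else 0) = 0) :
    ∫ x in closedBall (0 : EuclideanSpace ℝ (Fin 3)) r,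
        ∑ i, x i * ∑ j,
          fderiv ℝ (fun y => ρ y * ∑ k, F y i k * F y j k) x (EuclideanSpace.single j 1) =
      -(∫ x in closedBall (0 : EuclideanSpace ℝ (Fin 3)) r,
          ρ x * ∑ i, ∑ j, (F x i j - if i = j then 1 else 0) ^ 2) -
        ∫ x in closedBall (0 : EuclideanSpace ℝ (Fin 3)) r,
          ρ x * ∑ i, (F x i i - 1) := by
  obtain ⟨r', hr', hsupp⟩ := hsupp
  have hFij (i j : Fin 3) : ContDiff ℝ 1 fun y => F y i j := by fun_prop
  let G (i j : Fin 3) (y : EuclideanSpace ℝ (Fin 3)) : ℝ := F y i j - if i = j then 1 else 0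
  have hG (i j : Fin 3) : ContDiff ℝ 1 (G i j) := (hFij i j).sub contDiff_const
  let A (i j : Fin 3) (y : EuclideanSpace ℝ (Fin 3)) : ℝ :=
    ρ y * (∑ k, G i k y * G j k y + G j i y)
  have hA (i j : Fin 3) : ContDiff ℝ 1 (A i j) :=
    hρ.mul ((ContDiff.sum fun k _ => (hG i k).mul (hG j k)).add (hG j i))
  have hAsupp (x : EuclideanSpace ℝ (Fin 3)) (hx : r' ≤ ‖x‖) (i j : Fin 3) : A i j x = 0 := by
    have h (i j : Fin 3) : ρ x * G i j x = 0 := hsupp x hx i j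
    simp only [A, mul_add, Finset.mul_sum, ← mul_assoc, h, zero_mul, Finset.sum_const_zero,
      add_zero]
  -- `F Fᵀ = G Gᵀ + Gᵀ + F` with `G = F - I`, and `ρ F` has divergence-free rows.
  have hsplit (i j : Fin 3) :
      (fun y => ρ y * ∑ k, F y i k * F y j k) = fun y => A i j y + ρ y * F y i j := by
    funext y
    fin_cases i <;> fin_cases j <;> simp [A, G, Fin.sum_univ_three] <;> ring
  have hdivA (x : EuclideanSpace ℝ (Fin 3)) (hx : x ∈ closedBall 0 r) (i : Fin 3) :
      ∑ j, fderiv ℝ (fun y => ρ y * ∑ k, F y i k * F y j k) x (EuclideanSpace.single j 1) =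
        ∑ j, fderiv ℝ (A i j) x (EuclideanSpace.single j 1) := by
    rw [← add_zero (∑ j, fderiv ℝ (A i j) x _), ← hdiv x hx i, ← Finset.sum_add_distrib]
    refine Finset.sum_congr rfl fun j _ => ?_
    rw [hsplit, fderiv_fun_add ((hA i j).differentiable one_ne_zero x)
      ((hρ.mul (hFij i j)).differentiable one_ne_zero x)]
    rfl
  have hint {f : EuclideanSpace ℝ (Fin 3) → ℝ} (hf : Continuous f) :
      IntegrableOn f (closedBall 0 r) :=
    hf.continuousOn.integrableOn_compact (isCompact_closedBall 0 r)
  have hρc := hρ.continuous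
  have hFc := hF.continuous
  have hcongr : Set.EqOn
      (fun x : EuclideanSpace ℝ (Fin 3) => ∑ i, x i * ∑ j,
        fderiv ℝ (fun y => ρ y * ∑ k, F y i k * F y j k) x (EuclideanSpace.single j 1))
      (fun x => ∑ i, x i * ∑ j, fderiv ℝ (A i j) x (EuclideanSpace.single j 1))
      (closedBall 0 r) := fun x hx => by simp only [hdivA x hx]
  rw [setIntegral_congr_fun measurableSet_closedBall hcongr,
    setIntegral_closedBall_coord_mul_div hA hr' hAsupp, ← neg_add', ← integral_add]
  · congr 2
    funext x
    simp only [A, G, ← Finset.mul_sum, Finset.sum_add_distrib, mul_add, if_true, sq]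
  · exact hint (by fun_prop)
  · exact hint (by fun_prop)
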